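/- arXiv:2108.01492 — 2 statements merged into one kernel-verified Lean document; each statement's English description precedes it below -/
import Mathlib

section
/- Let S, R, T be commutative monoids such that S is T-dual to R with duality function ψ. Then a map m : S → S has a dual map n : R → R with respect to ψ if and only if m is a monoid homomorphism from S to S. Moreover, the dual map, if it exists, is unique and is itself a monoid homomorphism from R to R. -/
/-- `S` is `T`-dual to `R` with duality function `ψ`. -/
def IsDuality {S R T : Type*} [AddCommMonoid S] [AddCommMonoid R] [AddCommMonoid T]
    (ψ : S → R → T) : Prop :=
  (∀ x₁ x₂ : S, (∀ y, ψ x₁ y = ψ x₂ y) → x₁ = x₂) ∧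
  (∀ h : S → T, ((h 0 = 0 ∧ ∀ a b, h (a + b) = h a + h b) ↔ ∃ y, ∀ x, h x = ψ x y)) ∧
  (∀ y₁ y₂ : R, (∀ x, ψ x y₁ = ψ x y₂) → y₁ = y₂) ∧
  (∀ g : R → T, ((g 0 = 0 ∧ ∀ a b, g (a + b) = g a + g b) ↔ ∃ x, ∀ y, g y = ψ x y))

/-!
Currying `ψ` identifies `R` with `Hom(S, T)` and embeds `S` into `Hom(R, T)`. Under the first
identification, the dual map of a homomorphism `m` is precomposition `h ↦ h ∘ m`. Conversely, if `m`
has a dual map `n`, then each composite `ψ(·, y) ∘ m = ψ(·, n(y))` is a homomorphism, and since the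
maps `ψ(·, y)` separate points, so is `m`. Duality of maps is a symmetric relation, so the same
argument shows that `n` is a homomorphism.
-/

open Function

section DualMap

variable {S S' R R' T : Type*} [AddZeroClass S] [AddZeroClass S'] [AddZeroClass R]
  [AddZeroClass R'] [AddCommMonoid T]

/-- `n` is a dual map of `m`: `φ(m(x), y) = ψ(x, n(y))`. The source and the target of `m` carry
separate pairings `ψ` and `φ`; a self-map `m : S → S` is the case `φ = ψ`. -/
def IsDualMap (ψ : S →+ R →+ T) (φ : S' →+ R' →+ T) (m : S → S') (n : R' → R) : Prop :=
  ∀ x y, φ (m x) y = ψ x (n y)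

variable {ψ : S →+ R →+ T} {φ : S' →+ R' →+ T} {m : S → S'} {n n₁ n₂ : R' → R}

namespace IsDualMap

theorem flip (h : IsDualMap ψ φ m n) : IsDualMap φ.flip ψ.flip n m :=
  fun y x => (h x y).symm

theorem map_zero (h : IsDualMap ψ φ m n) (hφ : Injective φ) : m 0 = 0 :=
  hφ <| AddMonoidHom.ext fun y => by simp [h 0 y]

theorem map_add (h : IsDualMap ψ φ m n) (hφ : Injective φ) (a b : S) : m (a + b) = m a + m b :=
  hφ <| AddMonoidHom.ext fun y => by simp [h _ y]

theorem unique (h₁ : IsDualMap ψ φ m n₁) (h₂ : IsDualMap ψ φ m n₂) (hψ : Injective ψ.flip) :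
    n₁ = n₂ :=
  funext fun y => hψ <| AddMonoidHom.ext fun x => (h₁ x y).symm.trans (h₂ x y)

end IsDualMap

theorem exists_isDualMap (hψ : Surjective ψ.flip) (φ : S' →+ R' →+ T) (m : S →+ S') :
    ∃ n, IsDualMap ψ φ m n := by
  choose n hn using fun y => hψ ((φ.flip y).comp m)
  exact ⟨n, fun x y => (DFunLike.congr_fun (hn y) x).symm⟩

theorem maps_having_a_dual_general (hψ : Bijective ψ.flip) (hφ : Injective φ) (m : S → S') :
    ((∃ n, IsDualMap ψ φ m n) ↔ (m 0 = 0 ∧ ∀ a b, m (a + b) = m a + m b)) ∧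
    (∀ n₁ n₂, IsDualMap ψ φ m n₁ → IsDualMap ψ φ m n₂ → n₁ = n₂) ∧
    (∀ n, IsDualMap ψ φ m n → (n 0 = 0 ∧ ∀ a b, n (a + b) = n a + n b)) := by
  refine ⟨⟨?_, ?_⟩, ?_, ?_⟩
  · rintro ⟨n, h⟩
    exact ⟨h.map_zero hφ, h.map_add hφ⟩
  · rintro ⟨m_zero, m_add⟩
    exact exists_isDualMap hψ.surjective φ ⟨⟨m, m_zero⟩, m_add⟩
  · exact fun n₁ n₂ h₁ h₂ => h₁.unique h₂ hψ.injective
  · exact fun n h => ⟨h.flip.map_zero hψ.injective, h.flip.map_add hψ.injective⟩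

end DualMap

namespace IsDuality

variable {S R T : Type*} [AddCommMonoid S] [AddCommMonoid R] [AddCommMonoid T] {ψ : S → R → T}

theorem swap (hψ : IsDuality ψ) : IsDuality (Function.swap ψ) :=
  ⟨hψ.2.2.1, hψ.2.2.2, hψ.1, hψ.2.1⟩

theorem map_zero_left (hψ : IsDuality ψ) (y : R) : ψ 0 y = 0 :=
  ((hψ.2.1 (ψ · y)).2 ⟨y, fun _ => rfl⟩).1

theorem map_add_left (hψ : IsDuality ψ) (a b : S) (y : R) : ψ (a + b) y = ψ a y + ψ b y :=
  ((hψ.2.1 (ψ · y)).2 ⟨y, fun _ => rfl⟩).2 a b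

/-- The duality function as a biadditive pairing, in curried form. -/
def pairing (hψ : IsDuality ψ) : S →+ R →+ T where
  toFun x :=
    { toFun := ψ x
      map_zero' := hψ.swap.map_zero_left x
      map_add' := fun a b => hψ.swap.map_add_left a b x }
  map_zero' := AddMonoidHom.ext hψ.map_zero_left
  map_add' a b := AddMonoidHom.ext (hψ.map_add_left a b)

theorem pairing_injective (hψ : IsDuality ψ) : Injective hψ.pairing :=
  fun x₁ x₂ h => hψ.1 x₁ x₂ (DFunLike.congr_fun h)

theorem pairing_flip_surjective (hψ : IsDuality ψ) : Surjective hψ.pairing.flip := by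
  intro h
  obtain ⟨y, hy⟩ := (hψ.2.1 h).1 ⟨map_zero h, map_add h⟩
  exact ⟨y, AddMonoidHom.ext fun x => (hy x).symm⟩

theorem pairing_flip_bijective (hψ : IsDuality ψ) : Bijective hψ.pairing.flip :=
  ⟨hψ.swap.pairing_injective, hψ.pairing_flip_surjective⟩

end IsDuality

/-- Let `S, R, T` be commutative monoids such that `S` is `T`-dual to `R` with duality
function `ψ`.  A map `m : S → S` has a dual map `n : R → R` with respect to `ψ`
(meaning `ψ(m(x),y) = ψ(x,n(y))` for all `x, y`) if and only if `m` is a monoid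
homomorphism from `S` to `S`.  Moreover, the dual map, if it exists, is unique and is
itself a monoid homomorphism from `R` to `R`. -/
theorem maps_having_a_dual {S R T : Type*}
    [AddCommMonoid S] [AddCommMonoid R] [AddCommMonoid T]
    (ψ : S → R → T) (hψ : IsDuality ψ) (m : S → S) :
    ((∃ n : R → R, ∀ x y, ψ (m x) y = ψ x (n y)) ↔
      (m 0 = 0 ∧ ∀ a b, m (a + b) = m a + m b)) ∧
    (∀ n₁ n₂ : R → R, (∀ x y, ψ (m x) y = ψ x (n₁ y)) →
      (∀ x y, ψ (m x) y = ψ x (n₂ y)) → n₁ = n₂) ∧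
    (∀ n : R → R, (∀ x y, ψ (m x) y = ψ x (n y)) →
      (n 0 = 0 ∧ ∀ a b, n (a + b) = n a + n b)) :=
  maps_having_a_dual_general hψ.pairing_flip_bijective hψ.pairing_injective m
end

section
/- Let (S,+,·) be a commutative semiring in which the multiplicative unit 1 generates the additive monoid (S,+), i.e., every x ∈ S with x ≠ 0 is a finite sum 1 + ⋯ + 1 of n ≥ 1 copies of 1. Then the commutative monoid (S,+) is (S,+)-dual to (S,+) with duality function ψ(x,y) := x·y. -/
/-!
If the multiplication `A ⊗[R] A → A` of an `R`-algebra is injective, then `1 ⊗ a = a ⊗ 1`. Applying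
`x ⊗ y ↦ x • f y` to this identity shows that every `R`-linear map `f` out of `A` is
`a ↦ a • f 1`. For `R = ℕ` the linear maps are the additive ones, so the additive endomorphisms of
`A` are precisely the multiplications, and evaluation at `1` recovers the multiplier.
-/

open Function TensorProduct

section Pairing

variable {S R T : Type*}

section AddZeroClass

variable [AddZeroClass S] [AddZeroClass R] [AddCommMonoid T] (ψ : S →+ R →+ T)

theorem pairing_injective_iff :
    Injective ψ ↔ ∀ x₁ x₂, (∀ y, ψ x₁ y = ψ x₂ y) → x₁ = x₂ := by
  simp only [Injective, DFunLike.ext_iff]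

theorem pairing_surjective_iff :
    Surjective ψ ↔
      ∀ g : R → T, ((g 0 = 0 ∧ ∀ a b, g (a + b) = g a + g b) ↔ ∃ x, ∀ y, g y = ψ x y) := by
  refine ⟨fun hψ g ↦ ⟨fun ⟨hg_zero, hg_add⟩ ↦ ?_, ?_⟩, fun hψ g ↦ ?_⟩
  · obtain ⟨x, hx⟩ := hψ ⟨⟨g, hg_zero⟩, hg_add⟩
    exact ⟨x, fun y ↦ (DFunLike.congr_fun hx y).symm⟩
  · rintro ⟨x, hx⟩
    simp only [hx, map_zero, map_add, implies_true, and_self]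
  · obtain ⟨x, hx⟩ := (hψ g).mp ⟨map_zero g, map_add g⟩
    exact ⟨x, DFunLike.ext _ _ fun y ↦ (hx y).symm⟩

end AddZeroClass

theorem isDuality_iff_bijective [AddCommMonoid S] [AddCommMonoid R] [AddCommMonoid T]
    (ψ : S →+ R →+ T) :
    IsDuality (fun x y ↦ ψ x y) ↔ Bijective ψ ∧ Bijective ψ.flip := by
  simp only [IsDuality, Bijective, pairing_injective_iff, pairing_surjective_iff,
    AddMonoidHom.flip_apply]
  tauto

end Pairing

theorem map_eq_smul_map_one_of_isEpi {R A M : Type*} [CommSemiring R] [Semiring A] [Algebra R A]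
    [Algebra.IsEpi R A] [AddCommMonoid M] [Module R M] [Module A M] [IsScalarTower R A M]
    (f : A →ₗ[R] M) (a : A) : f a = a • f 1 := by
  have one_tmul_eq : (1 : A) ⊗ₜ[R] a = a ⊗ₜ 1 :=
    (Algebra.isEpi_iff_forall_one_tmul_eq R A).mp inferInstance a
  simpa using congrArg (lift ((Algebra.lsmul R R M).toLinearMap.compl₂ f)) one_tmul_eq

theorem mul_comm_of_isEpi (R : Type*) {A : Type*} [CommSemiring R] [Semiring A] [Algebra R A]
    [Algebra.IsEpi R A] (a b : A) : a * b = b * a := by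
  simpa using map_eq_smul_map_one_of_isEpi (LinearMap.mulLeft R a) b

theorem addMonoidHom_mul_flip_injective {S : Type*} [NonAssocSemiring S] :
    Injective (AddMonoidHom.mul (R := S)).flip := fun a b h ↦ by
  simpa using DFunLike.congr_fun h 1

section IsEpiNat

variable {S : Type*} [Semiring S] [Algebra.IsEpi ℕ S]

theorem addMonoidHom_mul_flip_bijective_of_isEpi :
    Bijective (AddMonoidHom.mul (R := S)).flip :=
  ⟨addMonoidHom_mul_flip_injective, fun f ↦
    ⟨f 1, AddMonoidHom.ext fun x ↦ (map_eq_smul_map_one_of_isEpi f.toNatLinearMap x).symm⟩⟩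

theorem addMonoidHom_mul_flip_eq_of_isEpi :
    (AddMonoidHom.mul (R := S)).flip = AddMonoidHom.mul := by
  ext a b
  exact mul_comm_of_isEpi ℕ b a

end IsEpiNat

theorem semiring_generated_by_one_duality_general {S : Type*} [Semiring S] [Algebra.IsEpi ℕ S] :
    IsDuality (fun x y : S ↦ x * y) := by
  have flip_bijective := addMonoidHom_mul_flip_bijective_of_isEpi (S := S)
  have mul_bijective := addMonoidHom_mul_flip_eq_of_isEpi (S := S) ▸ flip_bijective
  exact (isDuality_iff_bijective AddMonoidHom.mul).mpr ⟨mul_bijective, flip_bijective⟩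

theorem natCast_surjective_of_forall_ne_zero_exists_nsmul_one {S : Type*} [AddMonoidWithOne S]
    (hgen : ∀ x : S, x ≠ 0 → ∃ n : ℕ, x = n • (1 : S)) :
    Surjective (Nat.cast : ℕ → S) := fun x ↦ by
  obtain rfl | hx := eq_or_ne x 0
  · exact ⟨0, Nat.cast_zero⟩
  · obtain ⟨n, rfl⟩ := hgen x hx
    exact ⟨n, (nsmul_one n).symm⟩

/-- Let `(S,+,·)` be a commutative semiring in which the multiplicative unit `1`
generates the additive monoid `(S,+)`, i.e. every nonzero `x ∈ S` is a sum of `n ≥ 1`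
copies of `1`.  Then the commutative monoid `(S,+)` is `(S,+)`-dual to `(S,+)` with
duality function `ψ(x,y) := x * y`. -/
theorem semiring_generated_by_one_duality {S : Type*} [CommSemiring S]
    (hgen : ∀ x : S, x ≠ 0 → ∃ n : ℕ, 1 ≤ n ∧ x = n • (1 : S)) :
    IsDuality (fun x y : S => x * y) := by
  have : Algebra.IsEpi ℕ S := Algebra.isEpi_of_surjective_algebraMap ℕ S <|
    natCast_surjective_of_forall_ne_zero_exists_nsmul_one fun x hx ↦
      (hgen x hx).imp fun _ ↦ And.right
  exact semiring_generated_by_one_duality_general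
end
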